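/- arXiv:math/0608275 — 5 statements merged into one kernel-verified Lean document; each statement's English description precedes it below -/
import Mathlib

section
/- Let X and Z be real Banach spaces and Φ : X → Z a map that is Fréchet differentiable at every point, with derivative DΦ(y) ∈ L(X,Z) at y. Set E := Φ(0) and L := DΦ(0). Suppose C > 0 and R : Z → X is a map satisfying L(R(z)) = z and ‖R(z)‖ ≤ C‖z‖ for all z ∈ Z, and suppose ρ > 0 is such that for every y ∈ X with ‖y‖ ≤ ρ and every x ∈ X one has ‖L(x) − DΦ(y)(x)‖ ≤ ‖x‖/(2C). Then for every z ∈ Z with ‖z − E‖ ≤ ρ/(2C) there exists x ∈ X with ‖x‖ ≤ 2C‖z − E‖ (hence ‖x‖ ≤ ρ) and Φ(x) = z. -/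
/-- **The quantitative Banach-space inverse function theorem.**
If `Φ : X → Z` is Fréchet differentiable everywhere, `L := DΦ(0)` has a right inverse `R`
bounded by `C`, and `DΦ(y)` stays within `1/(2C)` of `L` (in operator norm, expressed
pointwise) for `‖y‖ ≤ ρ`, then every `z` with `‖z - Φ(0)‖ ≤ ρ/(2C)` is attained:
`Φ(x) = z` for some `x` with `‖x‖ ≤ 2C‖z - Φ(0)‖`. -/
theorem stmt_0 {X Z : Type*} [NormedAddCommGroup X] [NormedSpace ℝ X] [CompleteSpace X]
    [NormedAddCommGroup Z] [NormedSpace ℝ Z] [CompleteSpace Z]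
    (Φ : X → Z) (DΦ : X → X →L[ℝ] Z) (hΦ : ∀ y : X, HasFDerivAt Φ (DΦ y) y)
    (E : Z) (hE : E = Φ 0) (L : X →L[ℝ] Z) (hL : L = DΦ 0)
    (C : ℝ) (hC : 0 < C) (R : Z → X)
    (hLR : ∀ z : Z, L (R z) = z) (hRC : ∀ z : Z, ‖R z‖ ≤ C * ‖z‖)
    (ρ : ℝ) (hρ : 0 < ρ)
    (hvar : ∀ y : X, ‖y‖ ≤ ρ → ∀ x : X, ‖L x - DΦ y x‖ ≤ ‖x‖ / (2 * C)) :
    ∀ z : Z, ‖z - E‖ ≤ ρ / (2 * C) →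
      ∃ x : X, ‖x‖ ≤ 2 * C * ‖z - E‖ ∧ Φ x = z := by
  intro z hz
  have h2C : 0 < 2 * C := by positivity
  have happ : ApproximatesLinearOn Φ L (Metric.closedBall 0 ρ)
      (⟨(2 * C)⁻¹, by positivity⟩ : NNReal) := by
    intro x hx y hy
    refine (convex_closedBall (0 : X) ρ).norm_image_sub_le_of_norm_hasFDerivWithin_le'
      (f' := DΦ) (fun w _ => (hΦ w).hasFDerivWithinAt) ?_ hy hx
    intro w hw
    refine ContinuousLinearMap.opNorm_le_bound _ (inv_nonneg.2 h2C.le) fun v => ?_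
    have h := hvar w (by simpa using hw) v
    rw [norm_sub_rev, div_eq_inv_mul] at h
    exact h
  have hle : 2 * C * ‖z - E‖ ≤ ρ := by
    rw [le_div_iff₀ h2C] at hz
    linarith
  let S : L.NonlinearRightInverse := ⟨R, ⟨C, hC.le⟩, hRC, hLR⟩
  obtain ⟨x, hx, hxz⟩ := happ.surjOn_closedBall_of_nonlinearRightInverse S
    (ε := 2 * C * ‖z - E‖) (b := 0) (by positivity) (Metric.closedBall_subset_closedBall hle)
    (show z ∈ _ by
      rw [Metric.mem_closedBall, dist_eq_norm, ← hE]
      change ‖z - E‖ ≤ (C⁻¹ - (2 * C)⁻¹) * (2 * C * ‖z - E‖)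
      apply le_of_eq
      field_simp
      ring)
  exact ⟨x, by simpa using hx, hxz⟩
end

section
/- Let n ≥ 1 and A = (a₁,…,aₙ) ∈ (0,∞)ⁿ. Then there exists a constant C > 0 such that for every λ ≥ 1 and every k ∈ {1,…,n}, 0 ≤ θₖ(A) − θₖ(A,λ) ≤ C·λ^{−n}; i.e. θₖ(A,λ) = θₖ(A) + O(λ^{−n}) as λ → ∞. -/
open MeasureTheory Filter

/-- `P(A,λ) = ((1+a₁λ²)⋯(1+aₙλ²) − 1)/λ²` for `λ ≠ 0`, and `P(A,0) = a₁ + ⋯ + aₙ`. -/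
noncomputable def Pfun (n : ℕ) (A : Fin n → ℝ) (l : ℝ) : ℝ :=
  if l = 0 then ∑ k, A k else ((∏ k, (1 + A k * l ^ 2)) - 1) / l ^ 2

theorem aux_prod {ι : Type*} (s : Finset ι) (hs : s.Nonempty) (x : ι → ℝ) (hx : ∀ i, 0 ≤ x i) :
    1 + ∏ i ∈ s, x i ≤ ∏ i ∈ s, (1 + x i) := by
  induction hs using Finset.Nonempty.cons_induction with
  | singleton a => simp
  | cons a s ha hs ih =>
    rw [Finset.prod_cons, Finset.prod_cons]
    have h1 : 0 ≤ ∏ i ∈ s, x i := Finset.prod_nonneg fun i _ => hx i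
    nlinarith [hx a, mul_le_mul_of_nonneg_left ih (hx a)]

theorem aux_single {n : ℕ} (x : Fin n → ℝ) (hx : ∀ i, 0 ≤ x i) (k : Fin n) :
    1 + x k ≤ ∏ i, (1 + x i) := by
  rw [← Finset.mul_prod_erase _ _ (Finset.mem_univ k)]
  have h1 : 1 ≤ ∏ i ∈ Finset.univ.erase k, (1 + x i) := by
    have := Finset.prod_le_prod (s := Finset.univ.erase k) (f := fun _ => (1 : ℝ))
      (g := fun i => 1 + x i) (fun _ _ => zero_le_one) (fun i _ => by linarith [hx i])
    simpa using this
  nlinarith [hx k]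

theorem aux_P1 (n : ℕ) (A : Fin n → ℝ) (hA : ∀ k, 0 < A k) (k : Fin n) (s : ℝ) :
    A k ≤ Pfun n A s := by
  unfold Pfun
  split_ifs with h
  · exact Finset.single_le_sum (fun i _ => (hA i).le) (Finset.mem_univ k)
  · have h2 : 0 < s ^ 2 := by positivity
    rw [le_div_iff₀ h2]
    have := aux_single (fun i => A i * s ^ 2) (fun i => mul_nonneg (hA i).le h2.le) k
    linarith

theorem aux_P2 (n : ℕ) (hn : 1 ≤ n) (A : Fin n → ℝ) (hA : ∀ k, 0 < A k) (s : ℝ) (hs : 0 < s) :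
    (∏ i, A i) * (s ^ (n - 1)) ^ 2 ≤ Pfun n A s := by
  unfold Pfun
  rw [if_neg hs.ne']
  have h2 : 0 < s ^ 2 := by positivity
  rw [le_div_iff₀ h2]
  have := aux_prod Finset.univ ⟨⟨0, hn⟩, Finset.mem_univ _⟩ (fun i : Fin n => A i * s ^ 2)
    (fun i => mul_nonneg (hA i).le h2.le)
  simp only [Finset.prod_mul_distrib, Finset.prod_const, Finset.card_univ, Fintype.card_fin] at this
  obtain ⟨m, rfl⟩ : ∃ m, n = m + 1 := ⟨n - 1, by omega⟩
  have e : (∏ i, A i) * (s ^ (m + 1 - 1)) ^ 2 * s ^ 2 = (∏ i, A i) * (s ^ 2) ^ (m + 1) := by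
    simp only [Nat.add_sub_cancel]; ring
  rw [e]
  linarith

theorem aux_int (n : ℕ) (A : Fin n → ℝ) (hA : ∀ k, 0 < A k) (k : Fin n) :
    Integrable (fun s : ℝ => 1 / ((1 / A k + s ^ 2) * Real.sqrt (Pfun n A s))) := by
  have ha := hA k
  have hm : Measurable (Pfun n A) := by
    unfold Pfun
    refine Measurable.ite (measurableSet_singleton 0) measurable_const ?_
    fun_prop
  refine Integrable.mono' (integrable_inv_one_add_sq.const_mul ((A k + 1) / Real.sqrt (A k))) ?_ ?_
  · apply Measurable.aestronglyMeasurable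
    fun_prop
  · refine Eventually.of_forall fun s => ?_
    have h1 : 0 < 1 / A k + s ^ 2 := by positivity
    have h2 : 0 < Real.sqrt (A k) := Real.sqrt_pos.2 ha
    have h3 := Real.sqrt_le_sqrt (aux_P1 n A hA k s)
    have h4 : 1 + s ^ 2 ≤ (A k + 1) * (1 / A k + s ^ 2) := by
      have : (A k + 1) * (1 / A k + s ^ 2) = 1 + s ^ 2 + (1 / A k + A k * s ^ 2) := by
        field_simp; ring
      rw [this]
      have : 0 ≤ 1 / A k + A k * s ^ 2 := by positivity
      linarith
    rw [Real.norm_of_nonneg (by positivity)]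
    calc _ ≤ 1 / ((1 / A k + s ^ 2) * Real.sqrt (A k)) := by gcongr
      _ ≤ _ := by
        rw [← div_eq_mul_inv, div_div, div_le_div_iff₀ (by positivity) (by positivity)]
        nlinarith [mul_le_mul_of_nonneg_left h4 h2.le]

/-- **Asymptotics of the Lawlor angle functions:** `θₖ(A,λ) = θₖ(A) + O(λ^{−n})` as
`λ → ∞`; more precisely `0 ≤ θₖ(A) − θₖ(A,λ) ≤ C·λ^{−n}` for all `λ ≥ 1`, with a
constant `C` independent of `λ` and `k`. -/
theorem stmt_7 (n : ℕ) (hn : 1 ≤ n) (A : Fin n → ℝ) (hA : ∀ k, 0 < A k) :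
    ∃ C : ℝ, 0 < C ∧ ∀ l : ℝ, 1 ≤ l → ∀ k : Fin n,
      0 ≤ (∫ s : ℝ, 1 / ((1 / A k + s ^ 2) * Real.sqrt (Pfun n A s)))
          - (∫ s in Set.Iic l, 1 / ((1 / A k + s ^ 2) * Real.sqrt (Pfun n A s))) ∧
      (∫ s : ℝ, 1 / ((1 / A k + s ^ 2) * Real.sqrt (Pfun n A s)))
          - (∫ s in Set.Iic l, 1 / ((1 / A k + s ^ 2) * Real.sqrt (Pfun n A s)))
        ≤ C / l ^ n := by
  have hprod : 0 < ∏ i, A i := Finset.prod_pos fun i _ => hA i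
  have hq : 0 < Real.sqrt (∏ i, A i) := Real.sqrt_pos.2 hprod
  have hn0 : (0 : ℝ) < n := by exact_mod_cast hn
  refine ⟨1 / (Real.sqrt (∏ i, A i) * n), by positivity, fun l hl k => ?_⟩
  have hfint := aux_int n A hA k
  have ha := hA k
  have hl0 : 0 < l := by linarith
  have key := intervalIntegral.integral_Iic_add_Ioi (b := l) hfint.integrableOn hfint.integrableOn
  rw [← key, add_sub_cancel_left]
  refine ⟨integral_nonneg fun s => by positivity, ?_⟩
  have hlt : (-(n : ℝ) - 1) < -1 := by linarith
  have hI := integral_Ioi_rpow_of_lt hlt hl0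
  have hII := (integrableOn_Ioi_rpow_of_lt hlt hl0).const_mul (1 / Real.sqrt (∏ i, A i))
  calc _ ≤ ∫ s in Set.Ioi l, 1 / Real.sqrt (∏ i, A i) * s ^ (-(n : ℝ) - 1) := by
        refine setIntegral_mono_on hfint.integrableOn hII measurableSet_Ioi fun s hs => ?_
        have hs0 : 0 < s := hl0.trans hs
        have h3 := Real.sqrt_le_sqrt (aux_P2 n hn A hA s hs0)
        rw [Real.sqrt_mul hprod.le, Real.sqrt_sq (by positivity)] at h3
        have h4 : s ^ 2 ≤ 1 / A k + s ^ 2 := by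
          have : 0 < 1 / A k := by positivity
          linarith
        have e : s ^ (-(n : ℝ) - 1) = 1 / (s ^ 2 * s ^ (n - 1)) := by
          rw [← pow_add, show 2 + (n - 1) = n + 1 by omega,
            show -(n : ℝ) - 1 = -((n + 1 : ℕ) : ℝ) by push_cast; ring, Real.rpow_neg hs0.le,
            Real.rpow_natCast, one_div]
        rw [e, one_div_mul_one_div]
        apply one_div_le_one_div_of_le (by positivity)
        calc _ = s ^ 2 * (Real.sqrt (∏ i, A i) * s ^ (n - 1)) := by ring
          _ ≤ _ := by gcongr
    _ = _ := by
        rw [integral_const_mul, hI, show -(n : ℝ) - 1 + 1 = -(n : ℝ) by ring, Real.rpow_neg hl0.le,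
          Real.rpow_natCast]
        field_simp
end

section
/- For every integer n ≥ 1 and every A = (a₁,…,aₙ) ∈ (0,∞)ⁿ, the characteristic angles of the asymptotic planes of the Lawlor neck satisfy the angle criterion: Σ_{k=1}^{n} θₖ(A) = Σ_{k=1}^{n} ∫_{−∞}^{∞} ds/((1/aₖ + s²)√(P(A,s))) = π. -/
open MeasureTheory

/-- **The asymptotic planes of the Lawlor neck satisfy the angle criterion:**
the characteristic angles `θₖ(A) = ∫_ℝ ds/((1/aₖ + s²)√P(A,s))` sum to `π`. -/
theorem stmt_8 (n : ℕ) (hn : 1 ≤ n) (A : Fin n → ℝ) (hA : ∀ k, 0 < A k) :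
    ∑ k : Fin n, (∫ s : ℝ, 1 / ((1 / A k + s ^ 2) * Real.sqrt (Pfun n A s))) = Real.pi := by
  set Q : ℝ → ℝ := fun s => ∏ k, (1 + A k * s ^ 2) with hQ
  set g : Fin n → ℝ → ℝ := fun k s => 1 / ((1 / A k + s ^ 2) * Real.sqrt (Pfun n A s)) with hg
  have hfac : ∀ k s, 1 ≤ 1 + A k * s ^ 2 := fun k s => by
    have := hA k
    have : 0 ≤ A k * s ^ 2 := by positivity
    linarith
  have herase : ∀ k s, Q s = (1 + A k * s ^ 2) * ∏ j ∈ Finset.univ.erase k, (1 + A j * s ^ 2) :=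
    fun k s => (Finset.mul_prod_erase Finset.univ (fun j => 1 + A j * s ^ 2)
      (Finset.mem_univ k)).symm
  have hQlow : ∀ k s, 1 + A k * s ^ 2 ≤ Q s := fun k s => by
    rw [herase k s]
    have h1 : 1 ≤ ∏ j ∈ Finset.univ.erase k, (1 + A j * s ^ 2) :=
      Finset.prod_induction _ (fun x => (1 : ℝ) ≤ x) (fun a b ha hb => one_le_mul_of_one_le_of_one_le ha hb) le_rfl
        (fun j _ => hfac j s)
    have := hfac k s
    nlinarith
  let k0 : Fin n := ⟨0, hn⟩
  have hQ1 : ∀ s, s ≠ 0 → 1 < Q s := fun s hs => by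
    have := hA k0
    have h2 : 0 < A k0 * s ^ 2 := by positivity
    have := hQlow k0 s
    linarith
  have hQd : ∀ s, HasDerivAt Q (∑ k, (∏ j ∈ Finset.univ.erase k, (1 + A j * s ^ 2)) * (2 * A k * s)) s := by
    intro s
    have h0 : ∀ k ∈ (Finset.univ : Finset (Fin n)),
        HasDerivAt (fun s : ℝ => 1 + A k * s ^ 2) (2 * A k * s) s := fun k _ => by
      have h1 := ((hasDerivAt_pow 2 s).const_mul (A k)).const_add 1
      have h2 : A k * (((2 : ℕ) : ℝ) * s ^ (2 - 1)) = 2 * A k * s := by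
        norm_num
        ring
      rw [h2] at h1
      exact h1
    have := HasDerivAt.fun_finsetProd h0
    simpa [smul_eq_mul] using this
  have hQc : Continuous Q := continuous_iff_continuousAt.2 fun s => (hQd s).continuousAt
  have hPm : Measurable (Pfun n A) := by
    unfold Pfun
    exact Measurable.ite (measurableSet_singleton 0) measurable_const
      ((hQc.measurable.sub_const 1).div (measurable_id.pow_const 2))
  have hgm : ∀ k, Measurable (g k) := fun k => by
    simp only [hg]
    fun_prop
  have hg0 : ∀ k s, 0 ≤ g k s := fun k s => by
    have := hA k
    simp only [hg]
    positivity
  have hsq : ∀ s, 0 < s → Real.sqrt (Pfun n A s) = Real.sqrt (Q s - 1) / s := fun s hs => by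
    rw [Pfun, if_neg hs.ne', Real.sqrt_div' _ (by positivity), Real.sqrt_sq hs.le]
  have hFd : ∀ s ∈ Set.Ioi (0:ℝ), HasDerivAt (fun s => Real.arctan (Real.sqrt (Q s - 1))) (∑ k, g k s) s := by
    intro s hs
    have hs : 0 < s := hs
    have h1 := hQ1 s hs.ne'
    have := (((hQd s).sub_const 1).sqrt (by linarith)).arctan
    convert this using 1
    rw [Real.sq_sqrt (by linarith), Finset.sum_div, Finset.mul_sum]
    refine Finset.sum_congr rfl fun k _ => ?_
    simp only [hg]
    rw [hsq s hs]
    have hr : 0 < Real.sqrt (Q s - 1) := Real.sqrt_pos.2 (by linarith)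
    have hk := hA k
    have hE : 0 < ∏ j ∈ Finset.univ.erase k, (1 + A j * s ^ 2) :=
      Finset.prod_pos fun j _ => by linarith [hfac j s]
    have e1 : 1 + (Q s - 1) = (1 + A k * s ^ 2) * ∏ j ∈ Finset.univ.erase k, (1 + A j * s ^ 2) := by
      rw [← herase]; ring
    rw [e1]
    have := hfac k s
    have h3 : 1 + A k * s ^ 2 ≠ 0 := by linarith
    generalize (∏ j ∈ Finset.univ.erase k, (1 + A j * s ^ 2)) = E at *
    generalize Real.sqrt (Q s - 1) = r at *
    field_simp
  have hFc : ContinuousWithinAt (fun s => Real.arctan (Real.sqrt (Q s - 1))) (Set.Ici 0) 0 := by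
    apply Continuous.continuousWithinAt
    fun_prop
  have hlim : Filter.Tendsto (fun s => Real.arctan (Real.sqrt (Q s - 1))) Filter.atTop
      (nhds (Real.pi / 2)) := by
    refine (Real.tendsto_arctan_atTop.mono_right nhdsWithin_le_nhds).comp
      (Real.tendsto_sqrt_atTop.comp ?_)
    refine Filter.tendsto_atTop_mono (fun s => ?_)
      ((Filter.tendsto_pow_atTop (α := ℝ) two_ne_zero).const_mul_atTop (hA k0))
    have := hQlow k0 s
    linarith
  have hpos : ∀ s ∈ Set.Ioi (0:ℝ), 0 ≤ ∑ k, g k s := fun s _ => Finset.sum_nonneg fun k _ => hg0 k s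
  have hint := integrableOn_Ioi_deriv_of_nonneg hFc hFd hpos hlim
  have hval := integral_Ioi_of_hasDerivAt_of_nonneg hFc hFd hpos hlim
  have hgi : ∀ k, IntegrableOn (g k) (Set.Ioi 0) := fun k => by
    refine Integrable.mono' hint (hgm k).aestronglyMeasurable (Filter.Eventually.of_forall fun s => ?_)
    rw [Real.norm_of_nonneg (hg0 k s)]
    exact Finset.single_le_sum (f := fun k => g k s) (fun j _ => hg0 j s) (Finset.mem_univ k)
  have heven : ∀ k, ∫ s, g k s = 2 * ∫ s in Set.Ioi (0:ℝ), g k s := fun k => by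
    rw [← integral_comp_abs]
    congr 1
    ext s
    simp [hg, Pfun]
  have hQ0 : Q 0 = 1 := by simp [hQ]
  rw [integral_finsetSum _ (fun k _ => hgi k)] at hval
  rw [Finset.sum_congr rfl (fun k _ => heven k), ← Finset.mul_sum, hval, hQ0]
  simp
  ring
end

section
/- For every integer n ≥ 1 and every n-tuple of angles (φ₁,…,φₙ) ∈ (0,π)ⁿ with φ₁ + ⋯ + φₙ = π, there exists A = (a₁,…,aₙ) ∈ (0,∞)ⁿ such that θₖ(A) = φₖ for every k ∈ {1,…,n}. Hence every pair of transverse (special) Lagrangian planes whose characteristic angles satisfy the angle criterion can be realized as the pair of asymptotic planes of a Lawlor neck. -/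
open MeasureTheory

noncomputable def lnQ {n : ℕ} (x : Fin n → ℝ) (s : ℝ) : ℝ := ∏ k, (1 + Real.exp (x k) * s ^ 2)

noncomputable def lnh {n : ℕ} (x : Fin n → ℝ) (s : ℝ) : ℝ :=
  (Real.arctan (Real.sqrt (lnQ x s - 1)) - Real.arctan s) / s

noncomputable def lnG {n : ℕ} (x : Fin n → ℝ) : ℝ := ∫ s in Set.Ioi (0 : ℝ), lnh x s

noncomputable def lnd {n : ℕ} (x : Fin n → ℝ) (k : Fin n) (s : ℝ) : ℝ :=
  Real.exp (x k) * s / ((1 + Real.exp (x k) * s ^ 2) * Real.sqrt (lnQ x s - 1)) / 2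

lemma ln_arctan_le {z : ℝ} (hz : 0 ≤ z) : Real.arctan z ≤ z := by
  have := Real.le_tan (Real.arctan_nonneg.2 hz) (Real.arctan_lt_pi_div_two z)
  rwa [Real.tan_arctan] at this

lemma ln_arctan_ge {y : ℝ} (hy : 0 < y) : Real.pi / 2 - Real.arctan y ≤ 1 / y := by
  rw [← Real.arctan_inv_of_pos hy, one_div]
  exact ln_arctan_le (by positivity)

lemma lnQ_split {n : ℕ} (x : Fin n → ℝ) (m : Fin n) (s : ℝ) :
    ∃ K, 1 ≤ K ∧ ∀ t, lnQ (Function.update x m t) s = (1 + Real.exp t * s ^ 2) * K := by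
  refine ⟨∏ k ∈ Finset.univ.erase m, (1 + Real.exp (x k) * s ^ 2), ?_, ?_⟩
  · refine Finset.one_le_prod fun i _ => ?_
    have : 0 ≤ Real.exp (x i) * s ^ 2 := by positivity
    linarith
  · intro t
    unfold lnQ
    rw [← Finset.mul_prod_erase _ _ (Finset.mem_univ m)]
    congr 1
    · simp
    · refine Finset.prod_congr rfl fun i hi => ?_
      rw [Function.update_of_ne (Finset.ne_of_mem_erase hi)]

lemma lnQ_ge {n : ℕ} (x : Fin n → ℝ) (m : Fin n) (s : ℝ) :
    Real.exp (x m) * s ^ 2 ≤ lnQ x s - 1 := by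
  obtain ⟨K, hK, h⟩ := lnQ_split x m s
  have := h (x m)
  rw [Function.update_eq_self] at this
  rw [this]
  have h0 : 0 ≤ Real.exp (x m) * s ^ 2 := by positivity
  nlinarith

lemma lnQ_le {n : ℕ} (x : Fin n → ℝ) : ∃ C, 0 ≤ C ∧ ∀ s, 0 < s → s ≤ 1 →
    lnQ x s - 1 ≤ C ^ 2 * s ^ 2 := by
  set S := ∑ k, Real.exp (x k) with hS
  have hS0 : 0 ≤ S := Finset.sum_nonneg fun i _ => (Real.exp_pos _).le
  refine ⟨Real.sqrt (S * Real.exp S), Real.sqrt_nonneg _, fun s hs hs1 => ?_⟩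
  rw [Real.sq_sqrt (by positivity)]
  have h1 : lnQ x s ≤ Real.exp (S * s ^ 2) := by
    have := Real.prod_one_add_le_exp_sum (f := fun k => Real.exp (x k) * s ^ 2) Finset.univ
      (fun i => by positivity)
    rwa [← Finset.sum_mul] at this
  have h2 : Real.exp (S * s ^ 2) - 1 ≤ S * s ^ 2 * Real.exp (S * s ^ 2) := by
    have := Real.add_one_le_exp (-(S * s ^ 2))
    rw [Real.exp_neg] at this
    have hp := Real.exp_pos (S * s ^ 2)
    have h3 := mul_le_mul_of_nonneg_right this hp.le
    rw [inv_mul_cancel₀ hp.ne'] at h3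
    linarith
  have h4 : Real.exp (S * s ^ 2) ≤ Real.exp S := by
    apply Real.exp_le_exp.2
    have : s ^ 2 ≤ 1 := by nlinarith
    nlinarith
  have h5 : S * s ^ 2 * Real.exp (S * s ^ 2) ≤ S * s ^ 2 * Real.exp S := by gcongr
  linarith

lemma lnQ_cont {n : ℕ} (x : Fin n → ℝ) : Continuous (lnQ x) := by
  unfold lnQ; fun_prop

lemma lnh_meas {n : ℕ} (x : Fin n → ℝ) : Measurable (lnh x) := by
  have := (lnQ_cont x).measurable
  unfold lnh; fun_prop

lemma lnd_meas {n : ℕ} (x : Fin n → ℝ) (k : Fin n) : Measurable (lnd x k) := by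
  have := (lnQ_cont x).measurable
  unfold lnd; fun_prop

lemma ln_sqrt_ge {n : ℕ} (x : Fin n → ℝ) (m : Fin n) {s : ℝ} (hs : 0 < s) :
    Real.exp (x m / 2) * s ≤ Real.sqrt (lnQ x s - 1) := by
  apply Real.le_sqrt_of_sq_le
  refine le_trans (le_of_eq ?_) (lnQ_ge x m s)
  rw [mul_pow, ← Real.exp_nat_mul]
  congr 2; push_cast; ring

lemma lnh_int {n : ℕ} (x : Fin n → ℝ) (m : Fin n) :
    IntegrableOn (lnh x) (Set.Ioi 0) := by
  obtain ⟨C, hC0, hC⟩ := lnQ_le x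
  set c := Real.exp (x m / 2) with hc
  have hcp : 0 < c := Real.exp_pos _
  have hb : Integrable (fun s : ℝ => (2 * (C + 1) + 2 * (1 / c + 1)) * (1 + s ^ 2)⁻¹) :=
    integrable_inv_one_add_sq.const_mul _
  refine Integrable.mono' hb.integrableOn (lnh_meas x).aestronglyMeasurable ?_
  filter_upwards [ae_restrict_mem measurableSet_Ioi] with s hs
  have hs : 0 < s := hs
  have hR := ln_sqrt_ge x m hs
  rw [← hc] at hR
  set R := Real.sqrt (lnQ x s - 1) with hRd
  have hR0 : 0 ≤ R := Real.sqrt_nonneg _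
  unfold lnh
  rw [← hRd, Real.norm_eq_abs, abs_div, abs_of_pos hs, ← div_eq_mul_inv,
    div_le_div_iff₀ hs (by positivity)]
  have ha := Real.arctan_nonneg.2 hR0
  have hb := Real.arctan_nonneg.2 hs.le
  rcases le_total s 1 with h1 | h1
  · have hRC : R ≤ C * s := by
      apply Real.sqrt_le_iff.2 ⟨by positivity, ?_⟩
      rw [mul_pow]; exact hC s hs h1
    have h3 := ln_arctan_le hR0
    have h4 := ln_arctan_le hs.le
    have h5 : |Real.arctan R - Real.arctan s| ≤ (C + 1) * s := by
      rw [abs_le]; constructor <;> nlinarith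
    have h6 : 1 + s ^ 2 ≤ 2 := by nlinarith
    calc _ ≤ (C + 1) * s * 2 := by gcongr
      _ ≤ _ := by
        have : 0 < 2 * (1 / c + 1) * s := by positivity
        nlinarith
  · have h3 : Real.pi / 2 - Real.arctan R ≤ 1 / (c * s) := by
      refine le_trans ?_ (ln_arctan_ge (by positivity))
      have := Real.arctan_mono hR
      linarith
    have h4 := ln_arctan_ge hs
    have h5 : |Real.arctan R - Real.arctan s| ≤ (1 / c + 1) / s := by
      have e : (1 / c + 1) / s = 1 / (c * s) + 1 / s := by field_simp
      have := Real.arctan_lt_pi_div_two R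
      have := Real.arctan_lt_pi_div_two s
      rw [e, abs_le]; constructor <;> linarith
    have h6 : 1 + s ^ 2 ≤ 2 * s ^ 2 := by nlinarith
    calc _ ≤ (1 / c + 1) / s * (2 * s ^ 2) := by gcongr
      _ = 2 * (1 / c + 1) * s := by field_simp
      _ ≤ _ := by
        have : 0 ≤ 2 * (C + 1) * s := by positivity
        nlinarith

lemma lnh_hasDeriv {n : ℕ} (x : Fin n → ℝ) (k : Fin n) {s : ℝ} (hs : 0 < s) (t : ℝ) :
    HasDerivAt (fun t => lnh (Function.update x k t) s) (lnd (Function.update x k t) k s) t := by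
  obtain ⟨K, hK, h⟩ := lnQ_split x k s
  unfold lnh lnd
  simp only [h, Function.update_self]
  have hE := Real.exp_pos t
  have hpos : 0 < (1 + Real.exp t * s ^ 2) * K - 1 := by
    have : 0 < Real.exp t * s ^ 2 := by positivity
    nlinarith
  have h1 : HasDerivAt (fun t => (1 + Real.exp t * s ^ 2) * K - 1) (Real.exp t * s ^ 2 * K) t := by
    have := ((((Real.hasDerivAt_exp t).mul_const (s ^ 2)).const_add 1).mul_const K).sub_const 1
    exact this
  have h2 := (((h1.sqrt hpos.ne').arctan).sub_const (Real.arctan s)).div_const s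
  refine h2.congr_deriv ?_
  symm
  rw [Real.sq_sqrt hpos.le]
  have := Real.sqrt_pos.2 hpos
  have : 0 < 1 + Real.exp t * s ^ 2 := by positivity
  rw [show 1 + ((1 + Real.exp t * s ^ 2) * K - 1) = (1 + Real.exp t * s ^ 2) * K by ring]
  field_simp

lemma lnd_bound {n : ℕ} (x : Fin n → ℝ) (k : Fin n) {s : ℝ} (hs : 0 < s) :
    0 ≤ lnd x k s ∧ lnd x k s ≤ Real.exp (x k / 2) / (1 + Real.exp (x k) * s ^ 2) := by
  have h := ln_sqrt_ge x k hs
  have he := Real.exp_pos (x k)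
  have he2 := Real.exp_pos (x k / 2)
  have e : Real.exp (x k) = Real.exp (x k / 2) * Real.exp (x k / 2) := by
    rw [← Real.exp_add]; congr 1; ring
  have hR : 0 < Real.sqrt (lnQ x s - 1) := lt_of_lt_of_le (by positivity) h
  unfold lnd
  refine ⟨by positivity, ?_⟩
  rw [div_div, div_le_div_iff₀ (by positivity) (by positivity)]
  set R := Real.sqrt (lnQ x s - 1)
  have : Real.exp (x k) * s ≤ Real.exp (x k / 2) * R := by
    rw [e, mul_assoc]; gcongr
  have h1 : 0 < 1 + Real.exp (x k) * s ^ 2 := by positivity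
  have h2 : 0 < Real.exp (x k / 2) * R := by positivity
  calc _ ≤ Real.exp (x k / 2) * R * (1 + Real.exp (x k) * s ^ 2) := by gcongr
    _ ≤ _ := by nlinarith [mul_pos h2 h1]

lemma lnG_hasDeriv {n : ℕ} (x : Fin n → ℝ) (k : Fin n) :
    HasDerivAt (fun t => lnG (Function.update x k t))
      (∫ s in Set.Ioi (0 : ℝ), lnd x k s) (x k) := by
  have key := hasDerivAt_integral_of_dominated_loc_of_deriv_le
    (μ := volume.restrict (Set.Ioi (0 : ℝ))) (x₀ := x k)
    (F := fun t s => lnh (Function.update x k t) s)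
    (F' := fun t s => lnd (Function.update x k t) k s)
    (bound := fun s => Real.exp ((x k + 1) / 2) *
      (1 + (Real.exp ((x k - 1) / 2) * s) ^ 2)⁻¹)
    (Metric.ball_mem_nhds (x k) one_pos)
    (Filter.Eventually.of_forall fun t => (lnh_meas _).aestronglyMeasurable)
    (lnh_int _ k) (lnd_meas _ k).aestronglyMeasurable ?_ ?_ ?_
  · have := key.2
    simp only [Function.update_eq_self] at this
    exact this
  · filter_upwards [ae_restrict_mem measurableSet_Ioi] with s hs t ht
    have hs : 0 < s := hs
    obtain ⟨h0, h1⟩ := lnd_bound (Function.update x k t) k hs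
    rw [Real.norm_of_nonneg h0]
    refine h1.trans ?_
    simp only [Function.update_self]
    rw [Metric.mem_ball, Real.dist_eq, abs_lt] at ht
    rw [mul_pow, ← Real.exp_nat_mul, ← div_eq_mul_inv]
    have : Real.exp ((2 : ℕ) * ((x k - 1) / 2)) ≤ Real.exp t := by
      apply Real.exp_le_exp.2; push_cast; linarith
    have : Real.exp (t / 2) ≤ Real.exp ((x k + 1) / 2) := by
      apply Real.exp_le_exp.2; linarith
    gcongr
  · have := (integrable_inv_one_add_sq.comp_mul_left'
      (Real.exp_pos ((x k - 1) / 2)).ne').const_mul (Real.exp ((x k + 1) / 2))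
    exact this.integrableOn
  · filter_upwards [ae_restrict_mem measurableSet_Ioi] with s hs t ht
    exact lnh_hasDeriv x k hs t

lemma lnQ_one (t s : ℝ) (hs : 0 < s) :
    Real.sqrt (lnQ (fun _ : Fin 1 => t) s - 1) = Real.exp (t / 2) * s := by
  have : lnQ (fun _ : Fin 1 => t) s - 1 = (Real.exp (t / 2) * s) ^ 2 := by
    rw [mul_pow, ← Real.exp_nat_mul]
    simp only [lnQ, Finset.univ_unique, Finset.prod_const, Finset.card_singleton, pow_one]
    rw [show ((2 : ℕ) : ℝ) * (t / 2) = t by push_cast; ring]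
    ring
  rw [this, Real.sqrt_sq (by positivity)]

lemma lnd_one (t : ℝ) : ∫ s in Set.Ioi (0 : ℝ), lnd (fun _ : Fin 1 => t) 0 s = Real.pi / 4 := by
  set c := Real.exp (t / 2) with hc
  have hcp : 0 < c := Real.exp_pos _
  have e : Real.exp t = c ^ 2 := by
    rw [hc, ← Real.exp_nat_mul]; congr 1; push_cast; ring
  have h1 : ∫ s in Set.Ioi (0 : ℝ), lnd (fun _ : Fin 1 => t) 0 s
      = ∫ s in Set.Ioi (0 : ℝ), c / 2 * (fun u : ℝ => (1 + u ^ 2)⁻¹) (c * s) := by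
    refine setIntegral_congr_fun measurableSet_Ioi fun s hs => ?_
    have hs : 0 < s := hs
    simp only [lnd]
    rw [lnQ_one t s hs, ← hc, e]
    have : 0 < 1 + c ^ 2 * s ^ 2 := by positivity
    have h2 : 1 + (c * s) ^ 2 = 1 + c ^ 2 * s ^ 2 := by ring
    rw [h2]
    field_simp
  rw [h1, integral_const_mul, integral_comp_mul_left_Ioi (fun u : ℝ => (1 + u ^ 2)⁻¹) _ hcp, mul_zero,
    integral_Ioi_inv_one_add_sq, Real.arctan_zero, smul_eq_mul]
  field_simp
  ring

lemma lnG_one (t : ℝ) : lnG (fun _ : Fin 1 => t) = Real.pi / 4 * t := by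
  have hd : ∀ t, HasDerivAt (fun t => lnG (fun _ : Fin 1 => t) - Real.pi / 4 * t) 0 t := by
    intro t
    have h := lnG_hasDeriv (fun _ : Fin 1 => t) 0
    rw [lnd_one] at h
    have e : ∀ u, Function.update (fun _ : Fin 1 => t) 0 u = fun _ => u := by
      intro u; funext i; rw [Subsingleton.elim i 0]; simp
    simp only [e] at h
    exact (h.sub ((hasDerivAt_id t).const_mul (Real.pi / 4))).congr_deriv (by simp)
  have h := is_const_of_deriv_eq_zero (fun t => (hd t).differentiableAt) (fun t => (hd t).deriv) t 0
  have h0 : lnG (fun _ : Fin 1 => (0 : ℝ)) = 0 := by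
    unfold lnG
    rw [setIntegral_congr_fun (g := fun _ => 0) measurableSet_Ioi]
    · simp
    · intro s hs
      simp [lnh, lnQ_one 0 s hs]
  simp only [h0] at h
  linarith

lemma lnG_shift {n : ℕ} (x : Fin n → ℝ) (m : Fin n) (t : ℝ) :
    lnG (fun k => x k + t) = lnG x + Real.pi / 4 * t := by
  set c := Real.exp (t / 2) with hc
  have hcp : 0 < c := Real.exp_pos _
  have e : Real.exp t = c ^ 2 := by
    rw [hc, ← Real.exp_nat_mul]; congr 1; push_cast; ring
  have h1 : lnG (fun k => x k + t) - lnG (fun _ : Fin 1 => t)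
      = ∫ s in Set.Ioi (0 : ℝ), c * lnh x (c * s) := by
    unfold lnG
    rw [← integral_sub (lnh_int _ m) (lnh_int _ 0)]
    refine setIntegral_congr_fun measurableSet_Ioi fun s hs => ?_
    have hs : 0 < s := hs
    simp only [lnh]
    rw [lnQ_one t s hs, ← hc]
    have : lnQ (fun k => x k + t) s = lnQ x (c * s) := by
      unfold lnQ
      refine Finset.prod_congr rfl fun i _ => ?_
      rw [Real.exp_add, e]; ring
    rw [this]
    field_simp
    ring
  rw [integral_const_mul, integral_comp_mul_left_Ioi _ _ hcp, mul_zero, smul_eq_mul,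
    mul_inv_cancel_left₀ hcp.ne', lnG_one] at h1
  unfold lnG at *
  linarith

lemma lnG_mono {n : ℕ} {x y : Fin n → ℝ} (m : Fin n) (h : ∀ k, x k ≤ y k) : lnG x ≤ lnG y := by
  refine setIntegral_mono_on (lnh_int x m) (lnh_int y m) measurableSet_Ioi fun s hs => ?_
  have hs : 0 < s := hs
  unfold lnh
  have : lnQ x s ≤ lnQ y s := by
    refine Finset.prod_le_prod (fun i _ => by positivity) fun i _ => ?_
    have := Real.exp_le_exp.2 (h i)
    gcongr
  have := Real.arctan_mono (Real.sqrt_le_sqrt (sub_le_sub_right this 1))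
  gcongr

lemma lnG_ge {n : ℕ} (x : Fin n → ℝ) (m : Fin n) : Real.pi / 4 * x m ≤ lnG x := by
  rw [← lnG_one]
  refine setIntegral_mono_on (lnh_int _ 0) (lnh_int x m) measurableSet_Ioi fun s hs => ?_
  have hs : 0 < s := hs
  unfold lnh
  rw [lnQ_one _ s hs]
  have := Real.arctan_mono (ln_sqrt_ge x m hs)
  gcongr

lemma lnG_cont {n : ℕ} (m : Fin n) : Continuous (lnG (n := n)) := by
  have key : ∀ x y : Fin n → ℝ, lnG x ≤ lnG y + Real.pi / 4 * dist x y := by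
    intro x y
    rw [← lnG_shift y m]
    refine lnG_mono m fun k => ?_
    have h1 := dist_le_pi_dist x y k
    rw [Real.dist_eq] at h1
    have := le_abs_self (x k - y k)
    linarith
  have : LipschitzWith (Real.toNNReal (Real.pi / 4)) (lnG (n := n)) := by
    refine LipschitzWith.of_le_add_mul _ fun x y => ?_
    rw [Real.coe_toNNReal _ (by positivity)]
    exact key x y
  exact this.continuous

lemma ln_theta {n : ℕ} (x : Fin n → ℝ) (k : Fin n) :
    (∫ s : ℝ, 1 / ((1 / Real.exp (x k) + s ^ 2) *
      Real.sqrt (Pfun n (fun j => Real.exp (x j)) s))) =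
      4 * ∫ s in Set.Ioi (0 : ℝ), lnd x k s := by
  have h := integral_comp_abs (f := fun s => 1 / ((1 / Real.exp (x k) + s ^ 2) *
      Real.sqrt (Pfun n (fun j => Real.exp (x j)) s)))
  have hP : ∀ s : ℝ, Pfun n (fun j => Real.exp (x j)) |s| = Pfun n (fun j => Real.exp (x j)) s := by
    intro s; simp [Pfun]
  simp only [hP, sq_abs] at h
  rw [h]
  rw [show (4 : ℝ) = 2 * 2 by norm_num, mul_assoc, ← integral_const_mul (2 : ℝ) (lnd x k)]
  refine congrArg (fun z : ℝ => 2 * z) ?_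
  refine setIntegral_congr_fun measurableSet_Ioi fun s hs => ?_
  have hs : 0 < s := hs
  have hR : 0 < Real.sqrt (lnQ x s - 1) := lt_of_lt_of_le (mul_pos (Real.exp_pos _) hs) (ln_sqrt_ge x k hs)
  have e : Pfun n (fun j => Real.exp (x j)) s = (lnQ x s - 1) / s ^ 2 := by
    simp only [Pfun, if_neg hs.ne', lnQ]
  simp only [lnd]
  rw [e, Real.sqrt_div' _ (by positivity), Real.sqrt_sq hs.le]
  have := Real.exp_pos (x k)
  have : 0 < 1 + Real.exp (x k) * s ^ 2 := by positivity
  have h3 : 1 / Real.exp (x k) + s ^ 2 = (1 + Real.exp (x k) * s ^ 2) / Real.exp (x k) := by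
    field_simp
  rw [h3]
  field_simp

/-- **Every admissible angle tuple is realized by a Lawlor neck:** for all angles
`φ₁, …, φₙ ∈ (0,π)` with `φ₁ + ⋯ + φₙ = π` there exists `A ∈ (0,∞)ⁿ` such that
`θₖ(A) = ∫_ℝ ds/((1/aₖ + s²)√P(A,s)) = φₖ` for every `k`. -/
theorem stmt_9 (n : ℕ) (hn : 1 ≤ n) (φ : Fin n → ℝ)
    (hφ : ∀ k, φ k ∈ Set.Ioo 0 Real.pi) (hsum : ∑ k, φ k = Real.pi) :
    ∃ A : Fin n → ℝ, (∀ k, 0 < A k) ∧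
      ∀ k : Fin n,
        (∫ s : ℝ, 1 / ((1 / A k + s ^ 2) * Real.sqrt (Pfun n A s))) = φ k := by
  let o : Fin n := ⟨0, hn⟩
  let F : (Fin n → ℝ) → ℝ := fun x => 4 * lnG x - ∑ k, φ k * x k
  have hFc : Continuous F := by
    have := lnG_cont o
    fun_prop
  have hFs : ∀ x t, F (fun k => x k + t) = F x := by
    intro x t
    simp only [F]
    rw [lnG_shift x o]
    simp only [mul_add, Finset.sum_add_distrib, ← Finset.sum_mul, hsum]
    ring
  -- coercivity
  have hco : ∀ x m, (∀ j, x j ≤ x m) → ∀ k, φ k * (x m - x k) ≤ F x := by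
    intro x m hm k
    have h1 := lnG_ge x m
    have h2 : ∑ k, φ k * (x m - x k) = Real.pi * x m - ∑ k, φ k * x k := by
      simp only [mul_sub, Finset.sum_sub_distrib, ← Finset.sum_mul, hsum]
    have h3 : φ k * (x m - x k) ≤ ∑ k, φ k * (x m - x k) :=
      Finset.single_le_sum (f := fun k => φ k * (x m - x k))
        (fun i _ => mul_nonneg (hφ i).1.le (sub_nonneg.2 (hm i))) (Finset.mem_univ k)
    simp only [F]
    linarith
  set C := F 0 with hC
  have hC0 : 0 ≤ C := by
    have := hco 0 o (fun j => le_rfl) o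
    simpa using this
  set M := ∑ k, C / φ k with hM
  have hMk : ∀ k, C / φ k ≤ M := fun k =>
    Finset.single_le_sum (f := fun k => C / φ k)
      (fun i _ => div_nonneg hC0 (hφ i).1.le) (Finset.mem_univ k)
  have hM0 : 0 ≤ M := le_trans (div_nonneg hC0 (hφ o).1.le) (hMk o)
  have hK : IsCompact (Metric.closedBall (0 : Fin n → ℝ) M) := isCompact_closedBall _ _
  obtain ⟨x, hx, hmin⟩ := hK.exists_isMinOn ⟨0, by simpa using hM0⟩ hFc.continuousOn
  have hglob : ∀ y, F x ≤ F y := by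
    intro y
    rw [← hFs y (-(y o))]
    set z : Fin n → ℝ := fun k => y k + -(y o) with hz
    have hzo : z o = 0 := by simp [hz]
    rcases le_total C (F z) with h | h
    · exact le_trans (hmin (by simpa using hM0)) h
    · apply hmin
      rw [mem_closedBall_zero_iff, pi_norm_le_iff_of_nonneg hM0]
      haveI : Nonempty (Fin n) := ⟨o⟩
      obtain ⟨m, hm⟩ := Finite.exists_max z
      have h1 := hco z m hm
      have hb : ∀ k, z m - z k ≤ M := fun k => by
        refine le_trans ?_ (hMk k)
        rw [le_div_iff₀ (hφ k).1, mul_comm]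
        exact (h1 k).trans h
      intro k
      rw [Real.norm_eq_abs, abs_le]
      have := hb o
      have := hb k
      have := hm k
      have := hm o
      constructor <;> linarith
  refine ⟨fun k => Real.exp (x k), fun k => Real.exp_pos _, fun k => ?_⟩
  rw [ln_theta x k]
  have hd := (lnG_hasDeriv x k).const_mul 4
  have hlin : HasDerivAt (fun t => ∑ j, φ j * Function.update x k t j) (φ k) (x k) := by
    have e : (fun t => ∑ j, φ j * Function.update x k t j) =
        fun t => φ k * t + ∑ j ∈ Finset.univ.erase k, φ j * x j := by
      funext t
      rw [← Finset.add_sum_erase _ _ (Finset.mem_univ k)]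
      congr 1
      · simp
      · refine Finset.sum_congr rfl fun i hi => ?_
        rw [Function.update_of_ne (Finset.ne_of_mem_erase hi)]
    rw [e]
    exact (((hasDerivAt_id (x k)).const_mul (φ k)).add_const _).congr_deriv (by simp)
  have hF := hd.sub hlin
  have hloc : IsLocalMin (fun t => F (Function.update x k t)) (x k) := by
    refine Filter.Eventually.of_forall fun t => ?_
    simp only [Function.update_eq_self]
    exact hglob _
  have := hloc.hasDerivAt_eq_zero hF
  linarith
end

section
/- Let n ≥ 2, let m₂,…,mₙ be integers with |m_s| ≥ 4 such that 2·(1/m₂ + ⋯ + 1/mₙ) is not an integer, set ξ_s := exp(2πi/m_s) for s = 2,…,n and ξ_{n+1} := −exp(−2πi(1/m₂ + ⋯ + 1/mₙ)), and let U be the unitary map of ℂ^{n+1} defined by U(z¹, z², z³, …, z^{n+1}) := (ξ₂z², z¹, ξ₃z³, …, ξ_{n+1}z^{n+1}). Let S₀ := { x ∈ ℂ^{n+1} : every coordinate of x is real and ‖x‖ = 1 }. Then S₀ ∩ U(S₀) = { e₂, −e₂ } and S₀ ∩ U^{−1}(S₀) = { e₁, −e₁ }, where e₁ = (1,0,…,0)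 and e₂ = (0,1,0,…,0). -/
theorem aux_single_s16 {N : ℕ} (x : EuclideanSpace ℂ (Fin N)) (i0 : Fin N)
    (hre : ∀ i, (x i).im = 0) (hx : ‖x‖ = 1) (h0 : ∀ i, i ≠ i0 → x i = 0) :
    x = EuclideanSpace.single i0 1 ∨ x = -EuclideanSpace.single i0 1 := by
  have hs : x = EuclideanSpace.single i0 (x i0) := by
    ext i
    by_cases h : i = i0
    · subst h; simp
    · simp [h0 i h, h]
  have hn : ‖x i0‖ = 1 := by
    rw [hs, EuclideanSpace.norm_single] at hx
    exact hx
  have hr : x i0 = (((x i0).re : ℝ) : ℂ) := by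
    apply Complex.ext <;> simp [hre i0]
  rw [hr, Complex.norm_real, Real.norm_eq_abs] at hn
  rcases eq_or_eq_neg_of_abs_eq hn with h | h
  · left
    rw [hs, hr, h]; simp
  · right
    rw [hs, hr, h]
    ext i
    by_cases hi : i = i0
    · subst hi; simp
    · simp [hi]

theorem aux_im_zero {a b : ℂ} (ha : a.im ≠ 0) (hb : b.im = 0) (hab : (a * b).im = 0) : b = 0 := by
  rw [Complex.mul_im, hb] at hab
  apply Complex.ext
  · simpa [ha] using hab
  · simpa using hb

theorem aux_exp_im (t : ℝ) (ht : ∀ z : ℤ, 2 * t ≠ z) :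
    (Complex.exp (2 * Real.pi * Complex.I * t)).im ≠ 0 := by
  have : (2 * Real.pi * Complex.I * t : ℂ) = ((2 * Real.pi * t : ℝ) : ℂ) * Complex.I := by
    push_cast; ring
  rw [this, Complex.exp_ofReal_mul_I_im]
  intro h
  obtain ⟨z, hz⟩ := Real.sin_eq_zero_iff.1 h
  apply ht z
  have hp := Real.pi_ne_zero
  apply mul_right_cancel₀ hp
  linarith

theorem aux_inv (m : ℤ) (hm : 4 ≤ |m|) (z : ℤ) : 2 * (1 / (m : ℝ)) ≠ z := by
  have hm0 : m ≠ 0 := by rintro rfl; simp at hm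
  have hm1 : (m : ℝ) ≠ 0 := by exact_mod_cast hm0
  intro h
  field_simp at h
  have h2 : (2 : ℤ) = m * z := by exact_mod_cast h
  have h3 : m ∣ 2 := ⟨z, h2⟩
  have h4 := Int.le_of_dvd (by norm_num) ((abs_dvd m 2).2 h3)
  omega

/-- **The gluing points of Example 2:** with
`U(z¹, z², z³, …, z^{n+1}) = (ξ₂z², z¹, ξ₃z³, …, ξ_{n+1}z^{n+1})` built from integers
`m₂, …, mₙ` with `|m_s| ≥ 4` and `2·Σ 1/m_s ∉ ℤ` (and `ξ_{n+1} = −exp(−2πi·Σ 1/m_s)`),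
the real equatorial `n`-sphere `S₀` satisfies `S₀ ∩ U(S₀) = {e₂, −e₂}` and
`S₀ ∩ U⁻¹(S₀) = {e₁, −e₁}`. -/
theorem stmt_16 (n : ℕ) (hn : 2 ≤ n) (m : Fin (n - 1) → ℤ)
    (hm : ∀ j, 4 ≤ |m j|)
    (hnotint : ∀ z : ℤ, 2 * ∑ j, (1 / (m j : ℝ)) ≠ (z : ℝ))
    (ξ : Fin n → ℂ)
    (hξ : ∀ j : Fin (n - 1), ξ ⟨(j : ℕ), by have := j.isLt; omega⟩
      = Complex.exp (2 * Real.pi * Complex.I / (m j : ℂ)))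
    (hξn : ξ ⟨n - 1, by omega⟩
      = -Complex.exp (-(2 * Real.pi * Complex.I) * ∑ j, (1 / (m j : ℂ))))
    (U : EuclideanSpace ℂ (Fin (n + 1)) → EuclideanSpace ℂ (Fin (n + 1)))
    (hU : ∀ z : EuclideanSpace ℂ (Fin (n + 1)),
      U z = (WithLp.equiv 2 (Fin (n + 1) → ℂ)).symm fun i =>
        if (i : ℕ) = 0 then ξ ⟨0, by omega⟩ * z ⟨1, by omega⟩
        else if (i : ℕ) = 1 then z ⟨0, by omega⟩
        else ξ ⟨(i : ℕ) - 1, by have := i.isLt; omega⟩ * z i) :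
    ({x : EuclideanSpace ℂ (Fin (n + 1)) | (∀ i, (x i).im = 0) ∧ ‖x‖ = 1} ∩
        U '' {x : EuclideanSpace ℂ (Fin (n + 1)) | (∀ i, (x i).im = 0) ∧ ‖x‖ = 1}
      = {EuclideanSpace.single 1 1, -EuclideanSpace.single 1 1}) ∧
    ({x : EuclideanSpace ℂ (Fin (n + 1)) | (∀ i, (x i).im = 0) ∧ ‖x‖ = 1} ∩
        U ⁻¹' {x : EuclideanSpace ℂ (Fin (n + 1)) | (∀ i, (x i).im = 0) ∧ ‖x‖ = 1}
      = {EuclideanSpace.single 0 1, -EuclideanSpace.single 0 1}) := by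
  have him : ∀ k : Fin n, (ξ k).im ≠ 0 := by
    intro k
    by_cases hk : (k : ℕ) < n - 1
    · have h := hξ ⟨k, hk⟩
      have h2 : (2 * Real.pi * Complex.I / (m ⟨k, hk⟩ : ℂ))
          = 2 * Real.pi * Complex.I * ((1 / (m ⟨k, hk⟩ : ℝ) : ℝ) : ℂ) := by
        push_cast; ring
      rw [h2] at h
      have h3 := aux_exp_im _ (aux_inv _ (hm ⟨k, hk⟩))
      rw [← h] at h3
      exact h3
    · have hk2 : k = ⟨n - 1, by omega⟩ := by
        apply Fin.ext; have := k.isLt; simp only; omega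
      have h2 : (-(2 * Real.pi * Complex.I) * ∑ j, (1 / (m j : ℂ)))
          = 2 * Real.pi * Complex.I * ((-∑ j, (1 / (m j : ℝ)) : ℝ) : ℂ) := by
        push_cast; ring
      rw [hk2, hξn, h2, Complex.neg_im]
      refine neg_ne_zero.2 (aux_exp_im _ ?_)
      intro z hz
      apply hnotint (-z)
      push_cast
      linarith
  have e0 : (⟨0, by omega⟩ : Fin (n + 1)) = 0 := rfl
  have e1 : (⟨1, by omega⟩ : Fin (n + 1)) = 1 := by
    apply Fin.ext
    rw [Fin.val_one', Nat.mod_eq_of_lt (by omega)]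
  have v1 : ((1 : Fin (n + 1)) : ℕ) = 1 := by rw [← e1]
  have ne01 : (0 : Fin (n + 1)) ≠ 1 := by
    intro h
    have := congrArg Fin.val h
    rw [v1] at this
    simp at this
  have U0 : ∀ z, U z 0 = ξ ⟨0, by omega⟩ * z 1 := by
    intro z; rw [hU, ← e1]; simp
  have U1 : ∀ z, U z 1 = z 0 := by
    intro z; rw [hU]; simp [show n ≠ 0 by omega, show 0 < n by omega]
  have U2 : ∀ z (i : Fin (n + 1)), i ≠ 0 → i ≠ 1 →
      U z i = ξ ⟨(i : ℕ) - 1, by have := i.isLt; omega⟩ * z i := by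
    intro z i h0 h1
    have a0 : (i : ℕ) ≠ 0 := fun h => h0 (Fin.ext h)
    have a1 : (i : ℕ) ≠ 1 := fun h => h1 (Fin.ext (h.trans v1.symm))
    rw [hU]; simp [a0, a1, -Fin.val_eq_zero_iff]
  have Us : ∀ c : ℂ, U (EuclideanSpace.single 0 c) = EuclideanSpace.single 1 c := by
    intro c
    ext i
    by_cases h0 : i = 0
    · subst h0; rw [U0]; simp [ne01, ne01.symm]
    · by_cases h1 : i = 1
      · subst h1; rw [U1]; simp
      · rw [U2 _ _ h0 h1]; simp [h0, h1]
  have sn : ∀ i : Fin (n + 1), -(EuclideanSpace.single i (1 : ℂ)) = EuclideanSpace.single i (-1) := by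
    intro i
    ext j
    by_cases h : j = i
    · subst h; simp
    · simp [h]
  have mem : ∀ (i : Fin (n + 1)) (c : ℂ), c = 1 ∨ c = -1 →
      (∀ j, ((EuclideanSpace.single i c : EuclideanSpace ℂ (Fin (n + 1))) j).im = 0) ∧
      ‖(EuclideanSpace.single i c : EuclideanSpace ℂ (Fin (n + 1)))‖ = 1 := by
    intro i c hc
    constructor
    · intro j
      by_cases h : j = i
      · subst h; rcases hc with rfl | rfl <;> simp
      · simp [h]
    · rw [EuclideanSpace.norm_single]; rcases hc with rfl | rfl <;> simp
  have key : ∀ y : EuclideanSpace ℂ (Fin (n + 1)), (∀ i, (y i).im = 0) → (∀ i, (U y i).im = 0) →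
      ∀ i, i ≠ 0 → y i = 0 := by
    intro y hy hUy i hi
    by_cases h1 : i = 1
    · subst h1
      exact aux_im_zero (him _) (hy 1) (by rw [← U0]; exact hUy 0)
    · exact aux_im_zero (him _) (hy i) (by rw [← U2 y i hi h1]; exact hUy i)
  constructor
  · ext x
    simp only [Set.mem_inter_iff, Set.mem_setOf_eq, Set.mem_image, Set.mem_insert_iff,
      Set.mem_singleton_iff]
    constructor
    · rintro ⟨⟨hx, hx1⟩, y, ⟨hy, -⟩, rfl⟩
      have hk := key y hy hx
      apply aux_single_s16 _ _ hx hx1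
      intro i hi
      by_cases h0 : i = 0
      · subst h0; rw [U0, hk 1 ne01.symm, mul_zero]
      · rw [U2 y i h0 hi, hk i h0, mul_zero]
    · rw [sn]
      rintro (rfl | rfl)
      · exact ⟨mem _ _ (Or.inl rfl), _, mem 0 _ (Or.inl rfl), Us _⟩
      · exact ⟨mem _ _ (Or.inr rfl), _, mem 0 _ (Or.inr rfl), Us _⟩
  · ext x
    simp only [Set.mem_inter_iff, Set.mem_setOf_eq, Set.mem_preimage, Set.mem_insert_iff,
      Set.mem_singleton_iff]
    constructor
    · rintro ⟨⟨hx, hx1⟩, hy, -⟩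
      exact aux_single_s16 _ _ hx hx1 (key x hx hy)
    · rw [sn]
      rintro (rfl | rfl)
      · rw [Us]; exact ⟨mem _ _ (Or.inl rfl), mem _ _ (Or.inl rfl)⟩
      · rw [Us]; exact ⟨mem _ _ (Or.inr rfl), mem _ _ (Or.inr rfl)⟩
end
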